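/- In the RRM setting, suppose additionally that C_log is star-shaped about the origin, i.e., αY ∈ C_log for all α ∈ (0,1) and Y ∈ C_log. Then the associated MARM ρ is star-shaped (ρ(αY) ≤ αρ(Y) for all α ∈ (0,1), Y ∈ C_log, extended-real arithmetic) if and only if the MARRM η is log-star-shaped: η(X^α) ≤ η(X)^α for all α ∈ (0,1) and X ∈ C (powers in [0,∞]). -/

import Mathlib

open MeasureTheory Filter Set ENNReal

/-- The set of strictly positive random variables (positive representatives of
elements of `L⁰₊₊`). -/
def L0pos (Ω : Type*) : Set (Ω → ℝ) := {X | ∀ ω, 0 < X ω}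

/-- The multi-asset return risk measure (MARRM) associated with the security set `S`,
the relative acceptance set `B` and the pricing map `π`:
`η(X) = inf {π(Z) : Z ∈ S, X/Z ∈ B}`, with `inf ∅ = ∞`. -/
noncomputable def marrm {Ω : Type*} (S B : Set (Ω → ℝ)) (π : (Ω → ℝ) → ℝ) (X : Ω → ℝ) : ℝ≥0∞ :=
  sInf ((fun Z => ENNReal.ofReal (π Z)) '' {Z | Z ∈ S ∧ (fun ω => X ω / Z ω) ∈ B})

/-- `L^∞₊₊`: strictly positive, (essentially) bounded random variables. -/
def LinftyPos {Ω : Type*} [MeasurableSpace Ω] (P : Measure Ω) : Set (Ω → ℝ) :=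
  {X | (∀ ω, 0 < X ω) ∧ ∃ c : ℝ, ∀ᵐ ω ∂P, X ω ≤ c}

/-- The image of a set of random variables under the pointwise logarithm,
e.g. `C_log = {log X : X ∈ C}`. -/
def logIm {Ω : Type*} (A : Set (Ω → ℝ)) : Set (Ω → ℝ) :=
  (fun X => fun ω => Real.log (X ω)) '' A

/-- The multi-asset risk measure (MARM) with security set `Slog`, acceptance set `Anu`
and pricing map `πlog`: `ρ(Y) = inf {πlog(L) : L ∈ Slog, Y - L ∈ Anu}`, with
values in `[-∞,∞]` and `inf ∅ = +∞`. -/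
noncomputable def marm {Ω : Type*} (Slog Anu : Set (Ω → ℝ)) (πlog : (Ω → ℝ) → ℝ)
    (Y : Ω → ℝ) : EReal :=
  sInf ((fun L => (πlog L : EReal)) '' {L | L ∈ Slog ∧ (fun ω => Y ω - L ω) ∈ Anu})

/-- The relative acceptance set `B_ρ̃ = {X ∈ K : ρ̃(X) ≤ 1}` induced by a
return risk measure `ρt` on `K`. -/
def rrmAccept {Ω : Type*} (K : Set (Ω → ℝ)) (ρt : (Ω → ℝ) → ℝ) : Set (Ω → ℝ) :=
  {X | X ∈ K ∧ ρt X ≤ 1}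

/-- The MARM associated with a return risk measurement regime `(B_ρ̃, S, π)` in the
RRM setting: security set `S_log`, acceptance set `A_ν = {Y ∈ K_log : ν(Y) ≤ 0}` with
`ν = log ∘ ρ̃ ∘ exp`, and pricing map `π_log = log ∘ π ∘ exp`. -/
noncomputable def marmOf {Ω : Type*} (S K : Set (Ω → ℝ)) (π ρt : (Ω → ℝ) → ℝ) :
    (Ω → ℝ) → EReal :=
  marm (logIm S) {L | L ∈ logIm K ∧ Real.log (ρt (fun ω => Real.exp (L ω))) ≤ 0}
    (fun L => Real.log (π (fun ω => Real.exp (L ω))))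

/-!
`ENNReal.log` is an order isomorphism from `[0, ∞]` onto `[-∞, ∞]`, so it commutes with infima.
Since `log (X / Z) = log X - log Z`, the securities that are admissible for `log X` in the
logarithmic problem are exactly the logarithms of those admissible for `X`, and hence
`ρ (log X) = log (η X)`. As `log (X ^ a) = a * log X` both for random variables and in `[0, ∞]`,
taking logarithms turns `η (X ^ a) ≤ η X ^ a` into `ρ (a * log X) ≤ a * ρ (log X)`.
-/

section Logarithm

variable {Ω : Type*} {X : Ω → ℝ}

theorem L0pos.exp_log (hX : X ∈ L0pos Ω) : (fun ω => Real.exp (Real.log (X ω))) = X :=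
  funext fun ω => Real.exp_log (hX ω)

theorem L0pos.log_div {Z : Ω → ℝ} (hX : X ∈ L0pos Ω) (hZ : Z ∈ L0pos Ω) :
    (fun ω => Real.log (X ω / Z ω)) = fun ω => Real.log (X ω) - Real.log (Z ω) :=
  funext fun ω => Real.log_div (hX ω).ne' (hZ ω).ne'

theorem L0pos.log_rpow (hX : X ∈ L0pos Ω) (a : ℝ) :
    (fun ω => Real.log (X ω ^ a)) = fun ω => a * Real.log (X ω) :=
  funext fun ω => Real.log_rpow (hX ω) a

theorem L0pos.injOn_log : InjOn (fun (X : Ω → ℝ) ω => Real.log (X ω)) (L0pos Ω) :=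
  fun _X hX _Y hY h => funext fun ω => Real.log_injOn_pos (hX ω) (hY ω) (congrFun h ω)

theorem log_mem_logIm_iff {A : Set (Ω → ℝ)} (hA : A ⊆ L0pos Ω) (hX : X ∈ L0pos Ω) :
    (fun ω => Real.log (X ω)) ∈ logIm A ↔ X ∈ A :=
  L0pos.injOn_log.mem_image_iff hA hX

end Logarithm

section AcceptanceSet

variable {Ω : Type*} {S B : Set (Ω → ℝ)} {π : (Ω → ℝ) → ℝ} {X : Ω → ℝ}

theorem setOf_logIm_sub_mem_logIm (hS : S ⊆ L0pos Ω) (hB : B ⊆ L0pos Ω) (hX : X ∈ L0pos Ω) :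
    {L | L ∈ logIm S ∧ (fun ω => Real.log (X ω) - L ω) ∈ logIm B} =
      logIm {Z | Z ∈ S ∧ (fun ω => X ω / Z ω) ∈ B} := by
  have sub_mem_iff : ∀ Z ∈ S, (fun ω => Real.log (X ω) - Real.log (Z ω)) ∈ logIm B ↔
      (fun ω => X ω / Z ω) ∈ B := fun Z hZ => by
    rw [← L0pos.log_div hX (hS hZ)]
    exact log_mem_logIm_iff hB fun ω => div_pos (hX ω) (hS hZ ω)
  ext L
  constructor
  · rintro ⟨⟨Z, hZ, rfl⟩, hL⟩
    exact ⟨Z, ⟨hZ, (sub_mem_iff Z hZ).1 hL⟩, rfl⟩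
  · rintro ⟨Z, ⟨hZ, hXZ⟩, rfl⟩
    exact ⟨⟨Z, hZ, rfl⟩, (sub_mem_iff Z hZ).2 hXZ⟩

theorem marm_log_eq_log_marrm (hS : S ⊆ L0pos Ω) (hπ : ∀ Z ∈ S, 0 < π Z) (hB : B ⊆ L0pos Ω)
    (hX : X ∈ L0pos Ω) :
    marm (logIm S) (logIm B) (fun L => Real.log (π fun ω => Real.exp (L ω)))
        (fun ω => Real.log (X ω)) =
      ENNReal.log (marrm S B π X) := by
  have log_price : ∀ Z ∈ S, (Real.log (π fun ω => Real.exp (Real.log (Z ω))) : EReal) =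
      ENNReal.log (ENNReal.ofReal (π Z)) := fun Z hZ => by
    rw [L0pos.exp_log (hS hZ), ENNReal.log_ofReal_of_pos (hπ Z hZ)]
  rw [marm, setOf_logIm_sub_mem_logIm hS hB hX, marrm, ← ENNReal.logOrderIso_apply, map_sInf,
    logIm, image_image, image_image]
  exact congrArg sInf (image_congr fun Z hZ => log_price Z hZ.1)

theorem marm_mul_log_le_iff_marrm_rpow_le (hS : S ⊆ L0pos Ω) (hπ : ∀ Z ∈ S, 0 < π Z)
    (hB : B ⊆ L0pos Ω) (hX : X ∈ L0pos Ω) (a : ℝ) :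
    marm (logIm S) (logIm B) (fun L => Real.log (π fun ω => Real.exp (L ω)))
          (fun ω => a * Real.log (X ω)) ≤
        a * marm (logIm S) (logIm B) (fun L => Real.log (π fun ω => Real.exp (L ω)))
          (fun ω => Real.log (X ω)) ↔
      marrm S B π (fun ω => X ω ^ a) ≤ marrm S B π X ^ a := by
  have hXa : (fun ω => X ω ^ a) ∈ L0pos Ω := fun ω => Real.rpow_pos_of_pos (hX ω) a
  rw [← L0pos.log_rpow hX a, marm_log_eq_log_marrm hS hπ hB hXa,
    marm_log_eq_log_marrm hS hπ hB hX, ← ENNReal.log_rpow, ENNReal.log_le_log_iff]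

end AcceptanceSet

section ReturnRiskMeasure

variable {Ω : Type*} {S K : Set (Ω → ℝ)} {π ρt : (Ω → ℝ) → ℝ}

theorem logIm_rrmAccept (hK : K ⊆ L0pos Ω) (hρ : ∀ X ∈ K, 0 < ρt X) :
    logIm (rrmAccept K ρt) =
      {L | L ∈ logIm K ∧ Real.log (ρt fun ω => Real.exp (L ω)) ≤ 0} := by
  have log_nonpos_iff : ∀ X ∈ K,
      Real.log (ρt fun ω => Real.exp (Real.log (X ω))) ≤ 0 ↔ ρt X ≤ 1 := fun X hX => by
    rw [L0pos.exp_log (hK hX), Real.log_nonpos_iff (hρ X hX).le]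
  ext L
  constructor
  · rintro ⟨X, ⟨hX, hρX⟩, rfl⟩
    exact ⟨⟨X, hX, rfl⟩, (log_nonpos_iff X hX).2 hρX⟩
  · rintro ⟨⟨X, hX, rfl⟩, hL⟩
    exact ⟨X, ⟨hX, (log_nonpos_iff X hX).1 hL⟩, rfl⟩

theorem marmOf_eq_marm_logIm (hK : K ⊆ L0pos Ω) (hρ : ∀ X ∈ K, 0 < ρt X) :
    marmOf S K π ρt = marm (logIm S) (logIm (rrmAccept K ρt))
      fun L => Real.log (π fun ω => Real.exp (L ω)) := by
  rw [logIm_rrmAccept hK hρ, marmOf]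

theorem marm_starShaped_iff_marrm_logStarShaped_general {C : Set (Ω → ℝ)} (hC : C ⊆ L0pos Ω)
    (hS : S ⊆ L0pos Ω) (hπ : ∀ Z ∈ S, 0 < π Z) (hK : K ⊆ L0pos Ω) (hρ : ∀ X ∈ K, 0 < ρt X)
    (a : ℝ) :
    (∀ Y ∈ logIm C, marmOf S K π ρt (fun ω => a * Y ω) ≤ a * marmOf S K π ρt Y) ↔
      ∀ X ∈ C, marrm S (rrmAccept K ρt) π (fun ω => X ω ^ a) ≤
        marrm S (rrmAccept K ρt) π X ^ a := by
  have hB : rrmAccept K ρt ⊆ L0pos Ω := fun X hX => hK hX.1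
  rw [logIm, forall_mem_image, marmOf_eq_marm_logIm hK hρ]
  exact forall₂_congr fun X hX => marm_mul_log_le_iff_marrm_rpow_le hS hπ hB (hC hX) a

end ReturnRiskMeasure

theorem marm_starShaped_iff_marrm_logStarShaped {Ω : Type*} [MeasurableSpace Ω] (P : Measure Ω) [IsProbabilityMeasure P]
    (C S K : Set (Ω → ℝ)) (π ρt : (Ω → ℝ) → ℝ)
    (hCne : C.Nonempty) (hCpos : C ⊆ L0pos Ω)
    (hSne : S.Nonempty) (hSpos : S ⊆ L0pos Ω)
    (hπpos : ∀ Z ∈ S, 0 < π Z)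
    (hKne : K.Nonempty) (hKpos : K ⊆ L0pos Ω)
    (hKcone : ∀ l : ℝ, 0 < l → ∀ X ∈ K, (fun ω => l * X ω) ∈ K)
    (hKinf : LinftyPos P ⊆ K)
    (hcompat : ∀ X ∈ C, ∀ Z ∈ S, (fun ω => X ω / Z ω) ∈ K)
    (hCmul : ∀ X ∈ C, ∀ Y ∈ C, (fun ω => X ω * Y ω) ∈ C)
    (hCone : (fun _ => (1:ℝ)) ∈ C)
    (hCinv : ∀ X ∈ C, (fun ω => (X ω)⁻¹) ∈ C)
    (hρmono : ∀ X ∈ K, ∀ Y ∈ K, (∀ᵐ ω ∂P, X ω ≤ Y ω) → ρt X ≤ ρt Y)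
    (hρhom : ∀ l : ℝ, 0 < l → ∀ X ∈ K, ρt (fun ω => l * X ω) = l * ρt X)
    (hρpos : ∀ X ∈ K, 0 < ρt X)
    (hρone : ρt (fun _ => (1:ℝ)) = 1)
    (hClogstar : ∀ a ∈ Set.Ioo (0:ℝ) 1, ∀ Y ∈ logIm C, (fun ω => a * Y ω) ∈ logIm C) :
    (∀ a ∈ Set.Ioo (0:ℝ) 1, ∀ Y ∈ logIm C,
        marmOf S K π ρt (fun ω => a * Y ω) ≤ (a : EReal) * marmOf S K π ρt Y)
      ↔ (∀ a ∈ Set.Ioo (0:ℝ) 1, ∀ X ∈ C,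
        marrm S (rrmAccept K ρt) π (fun ω => X ω ^ a)
          ≤ marrm S (rrmAccept K ρt) π X ^ a) :=
  forall₂_congr fun a _ =>
    marm_starShaped_iff_marrm_logStarShaped_general hCpos hSpos hπpos hKpos hρpos a
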